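/- Let k be an algebraically closed field of characteristic 0 and let A be a finitely generated commutative k-algebra which is an integral domain. Let J be a non-zero Lie ideal of Der_k(A) and let P be a maximal ideal of A which is a nonsingular point, i.e., the localization A_P is formally smooth over k. Then J is ample at P: for every g ∈ P with g ∉ P², there exists μ ∈ J with μ(g) ∉ P. (Equivalently, the vector fields in J, specialized at P, span the whole tangent space at P.) -/

import Mathlib

set_option synthInstance.maxHeartbeats 400000

open KaehlerDifferential in
/-- The Kaehler module of `A` is, up to an element `s ∉ P`, a direct summand of a free module. -/
lemma exists_factor_kaehler.{u}
    (k : Type u) [Field k]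
    (A : Type u) [CommRing A] [Algebra k A] [Algebra.FiniteType k A]
    (P : Ideal A) [P.IsMaximal]
    (hsmooth : Algebra.FormallySmooth k (Localization.AtPrime P)) :
    ∃ (ι : Type u) (_ : Fintype ι) (φ : Ω[A⁄k] →ₗ[A] (ι → A)) (ψ : (ι → A) →ₗ[A] Ω[A⁄k]) (s : A),
      s ∉ P ∧ ∀ w, ψ (φ w) = s • w := by
  have : IsNoetherianRing A := Algebra.FiniteType.isNoetherianRing k A
  have : Module.FinitePresentation A Ω[A⁄k] := Module.finitePresentation_of_finite _ _
  let B := Localization.AtPrime P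
  have : Algebra.EssFiniteType A B := .of_isLocalization B P.primeCompl
  have : Algebra.EssFiniteType k B := .comp k A B
  have : Module.Projective B Ω[B⁄k] := hsmooth.projective_kaehlerDifferential
  have : Module.Free B Ω[B⁄k] := Module.free_of_flat_of_isLocalRing
  let ι := Module.Free.ChooseBasisIndex B Ω[B⁄k]
  let b := Module.Free.chooseBasis B Ω[B⁄k]
  let e : Ω[B⁄k] ≃ₗ[A] (ι → B) := b.equivFun.restrictScalars A
  let f : Ω[A⁄k] →ₗ[A] Ω[B⁄k] := KaehlerDifferential.map k k A B
  have hf : IsLocalizedModule P.primeCompl f :=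
    KaehlerDifferential.isLocalizedModule_map k A B P.primeCompl
  let g : (ι → A) →ₗ[A] (ι → B) := LinearMap.pi fun i => Algebra.linearMap A B ∘ₗ LinearMap.proj i
  have hg : IsLocalizedModule P.primeCompl g := by
    infer_instance
  obtain ⟨φ, s, hφ⟩ := Module.FinitePresentation.exists_lift_of_isLocalizedModule
    P.primeCompl g (e.toLinearMap ∘ₗ f)
  obtain ⟨ψ, t, hψ⟩ := Module.FinitePresentation.exists_lift_of_isLocalizedModule
    P.primeCompl f (e.symm.toLinearMap ∘ₗ g)
  have h1 : ∀ w, f (ψ (φ w)) = f ((t * s) • w) := by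
    intro w
    have h2 := LinearMap.congr_fun hψ (φ w)
    have h3 := LinearMap.congr_fun hφ w
    simp only [LinearMap.comp_apply, LinearMap.smul_apply, LinearEquiv.coe_coe] at h2 h3
    rw [h2, h3]
    simp only [Submonoid.smul_def, Submonoid.coe_mul, mul_smul, map_smul,
      LinearEquiv.symm_apply_apply]
  obtain ⟨c, hc⟩ := Module.Finite.exists_smul_of_comp_eq_of_isLocalizedModule
    P.primeCompl f (ψ ∘ₗ φ) ((t * s) • LinearMap.id) (LinearMap.ext h1)
  refine ⟨ι, inferInstance, φ, c • ψ, ((c * (t * s) : P.primeCompl) : A), (c * (t * s)).2, ?_⟩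
  intro w
  have := LinearMap.congr_fun hc w
  simp only [LinearMap.smul_apply, LinearMap.comp_apply, LinearMap.id_apply] at this ⊢
  rw [this, ← mul_smul]
  rfl

/-- The `k`-derivation `A → P/P²` given by `a ↦ a - a(P)`. -/
lemma exists_derivation_cotangent.{u}
    (k : Type u) [Field k] [IsAlgClosed k]
    (A : Type u) [CommRing A] [Algebra k A] [Algebra.FiniteType k A]
    (P : Ideal A) [P.IsMaximal] :
    ∃ d : Derivation k A P.Cotangent, ∀ y : P, d (y : A) = P.toCotangent y := by
  let := Ideal.Quotient.field P
  have := finite_of_finite_type_of_isJacobsonRing k (A ⧸ P)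
  have hb : Function.Bijective (algebraMap k (A ⧸ P)) :=
    IsAlgClosed.algebraMap_bijective_of_isIntegral
  let π : A →ₐ[k] k :=
    ((AlgEquiv.ofBijective (Algebra.ofId k (A ⧸ P)) hb).symm : (A ⧸ P) →ₐ[k] k).comp
      (Ideal.Quotient.mkₐ k P)
  have hπ : ∀ a : A, a - algebraMap k A (π a) ∈ P := by
    intro a
    rw [← Ideal.Quotient.eq]
    exact ((AlgEquiv.ofBijective (Algebra.ofId k (A ⧸ P)) hb).apply_symm_apply
      (Ideal.Quotient.mk P a)).symm
  have hπ0 : ∀ y ∈ P, π y = 0 := by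
    intro y hy
    have : Ideal.Quotient.mkₐ k P y = 0 := Ideal.Quotient.eq_zero_iff_mem.mpr hy
    simp only [π, AlgHom.comp_apply, this, map_zero]
  let L : A →ₗ[k] P :=
    { toFun := fun a => ⟨a - algebraMap k A (π a), hπ a⟩
      map_add' := by
        intro a b
        ext
        simp only [map_add, Submodule.coe_add]
        ring
      map_smul' := by
        intro c a
        ext
        change c • a - algebraMap k A (π (c • a)) = c • (a - algebraMap k A (π a))
        rw [map_smul, smul_eq_mul, map_mul,
          Algebra.smul_def, Algebra.smul_def, mul_sub] }
  refine ⟨Derivation.mk' ((P.toCotangent.restrictScalars k) ∘ₗ L) ?_, ?_⟩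
  · intro a b
    simp only [LinearMap.comp_apply, LinearMap.restrictScalars_apply]
    rw [← map_smul P.toCotangent, ← map_smul P.toCotangent, ← map_add, Ideal.toCotangent_eq]
    have h : (a * b - algebraMap k A (π (a * b))) -
        (a * (b - algebraMap k A (π b)) + b * (a - algebraMap k A (π a))) =
        - ((a - algebraMap k A (π a)) * (b - algebraMap k A (π b))) := by
      rw [map_mul, map_mul]; ring
    change (a * b - algebraMap k A (π (a * b))) -
        (a * (b - algebraMap k A (π b)) + b * (a - algebraMap k A (π a))) ∈ P ^ 2
    rw [h, pow_two]
    exact neg_mem (Ideal.mul_mem_mul (hπ a) (hπ b))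
  · intro y
    change P.toCotangent (L y) = _
    congr 1
    ext
    simp [L, hπ0 y y.2]

/-- Local coordinates and partial derivatives at a nonsingular point. -/
lemma exists_coordinates.{u}
    (k : Type u) [Field k] [IsAlgClosed k]
    (A : Type u) [CommRing A] [Algebra k A] [Algebra.FiniteType k A]
    (P : Ideal A) [P.IsMaximal]
    (hsmooth : Algebra.FormallySmooth k (Localization.AtPrime P)) :
    ∃ (ι : Type u) (_ : Fintype ι) (τ : ι → Derivation k A A) (x : ι → A) (s : A),
      s ∉ P ∧ (∀ i, x i ∈ P) ∧ ∀ y ∈ P, (∑ i, x i * τ i y) - s * y ∈ P ^ 2 := by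
  classical
  obtain ⟨ι, _, φ, ψ, s, hs, h⟩ := exists_factor_kaehler k A P hsmooth
  obtain ⟨d, hd⟩ := exists_derivation_cotangent k A P
  choose x hx using fun i : ι => P.toCotangent_surjective
    (d.liftKaehlerDifferential (ψ (Pi.single i 1)))
  refine ⟨ι, inferInstance, fun i => (LinearMap.proj i ∘ₗ φ).compDer (KaehlerDifferential.D k A),
    fun i => x i, s, hs, fun i => (x i).2, ?_⟩
  intro y hy
  have h1 := congrArg d.liftKaehlerDifferential (h (KaehlerDifferential.D k A y))
  rw [map_smul, Derivation.liftKaehlerDifferential_comp_D, hd ⟨y, hy⟩,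
    pi_eq_sum_univ' (φ (KaehlerDifferential.D k A y)), map_sum, map_sum] at h1
  simp only [map_smul] at h1
  have h2 : P.toCotangent (∑ i, φ (KaehlerDifferential.D k A y) i • x i) =
      P.toCotangent (s • ⟨y, hy⟩) := by
    rw [map_sum, map_smul, ← h1]
    refine Finset.sum_congr rfl fun i _ => ?_
    rw [map_smul, hx]
  rw [Ideal.toCotangent_eq] at h2
  convert h2 using 2
  · simp [mul_comm]
  · rfl

/-- Euler's identity. -/
lemma euler_mem_pow {k A : Type*} [Field k] [CommRing A] [Algebra k A] (P : Ideal A)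
    (E : Derivation k A A) (s : A) (hE : ∀ y ∈ P, E y - s * y ∈ P ^ 2) (m : ℕ) :
    ∀ h ∈ P ^ (m + 1), E h - ((m + 1 : ℕ) : A) * (s * h) ∈ P ^ (m + 2) := by
  induction m with
  | zero =>
    intro h hh
    simpa using hE h (by simpa using hh)
  | succ m ih =>
    intro h hh
    rw [pow_succ] at hh
    refine Submodule.mul_induction_on hh ?_ ?_
    · intro a ha b hb
      have h1 : a * (E b - s * b) ∈ P ^ (m + 1 + 2) := by
        rw [pow_add]; exact Ideal.mul_mem_mul ha (hE b hb)
      have h2 : (E a - ((m + 1 : ℕ) : A) * (s * a)) * b ∈ P ^ (m + 1 + 2) := by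
        rw [show m + 1 + 2 = (m + 2) + 1 by ring, pow_succ]
        exact Ideal.mul_mem_mul (ih a ha) hb
      convert add_mem h1 h2 using 1
      simp only [Derivation.leibniz, smul_eq_mul]
      push_cast
      ring
    · intro a b ha hb
      convert add_mem ha hb using 1
      rw [map_add]
      ring

/-- Every non-zero Lie ideal of `Der_k(A)` is ample at a nonsingular point `P`: for every
`g ∈ P \ P²` some derivation in the ideal sends `g` outside `P` (i.e. the vector fields in
the ideal, specialized at `P`, span the tangent space at `P`). -/
theorem lie_ideal_ample_at_nonsingular_point.{u}
    (k : Type u) [Field k] [IsAlgClosed k] [CharZero k]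
    (A : Type u) [CommRing A] [IsDomain A] [Algebra k A] [Algebra.FiniteType k A]
    (J : LieIdeal k (Derivation k A A)) (hJ : J ≠ ⊥)
    (P : Ideal A) [P.IsMaximal]
    (hsmooth : Algebra.FormallySmooth k (Localization.AtPrime P)) :
    ∀ g ∈ P, g ∉ P ^ 2 → ∃ μ ∈ J, μ g ∉ P := by
  have : IsNoetherianRing A := Algebra.FiniteType.isNoetherianRing k A
  obtain ⟨ι, _, τ, x, s, hs, hx, hτ⟩ := exists_coordinates k A P hsmooth
  have hPp : P.IsPrime := Ideal.IsMaximal.isPrime ‹_›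
  have hPn : P ≠ ⊤ := hPp.ne_top
  let E : Derivation k A A := ∑ i, x i • τ i
  have hEa : ∀ y, E y = ∑ i, x i * τ i y := by
    intro y
    simp only [E, ← Derivation.coeFnAddMonoidHom_apply, map_sum, Finset.sum_apply]
    rfl
  have hE : ∀ y ∈ P, E y - s * y ∈ P ^ 2 := by
    intro y hy
    rw [hEa]
    exact hτ y hy
  -- some derivation lowers the order of vanishing
  have lower : ∀ (m : ℕ) (h : A), h ∈ P ^ (m + 1) → h ∉ P ^ (m + 2) →
      ∃ i, τ i h ∉ P ^ (m + 1) := by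
    intro m h h1 h2
    by_contra! hall
    apply h2
    have h3 := euler_mem_pow P E s hE m h h1
    have h4 : E h ∈ P ^ (m + 2) := by
      rw [hEa]
      refine Ideal.sum_mem _ fun i _ => ?_
      rw [show m + 2 = 1 + (m + 1) by ring, pow_add, pow_one]
      exact Ideal.mul_mem_mul (hx i) (hall i)
    have h5 : ((m + 1 : ℕ) : A) * (s * h) ∈ P ^ (m + 2) := by
      simpa using sub_mem h4 h3
    have hu : IsUnit ((m + 1 : ℕ) : A) := by
      have : ((m + 1 : ℕ) : A) = algebraMap k A ((m + 1 : ℕ) : k) := by simp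
      rw [this]
      exact (IsUnit.mk0 _ (Nat.cast_ne_zero.mpr (Nat.succ_ne_zero m))).map _
    rw [Ideal.unit_mul_mem_iff_mem _ hu] at h5
    exact (Ideal.IsMaximal.mul_mem_pow P h5).resolve_left hs
  -- some member of `J` does not vanish at `P`
  have step1 : ∃ μ ∈ J, ∃ f, μ f ∉ P := by
    have hex : ∃ m : ℕ, ∃ μ ∈ J, ∃ f, μ f ∉ P ^ m := by
      by_contra! hall
      apply hJ
      rw [eq_bot_iff]
      intro μ hμ
      rw [LieSubmodule.mem_bot]
      ext f
      have : μ f ∈ (⨅ i : ℕ, P ^ i) := by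
        rw [Submodule.mem_iInf]
        exact fun i => hall i μ hμ f
      rw [Ideal.iInf_pow_eq_bot_of_isDomain P hPn] at this
      simpa using this
    classical
    obtain ⟨μ, hμ, f, hf⟩ := Nat.find_spec hex
    have hmin := fun m (hm : m < Nat.find hex) => Nat.find_min hex hm
    generalize Nat.find hex = m at hf hmin
    match m, hf, hmin with
    | 0, hf, _ => simp at hf
    | 1, hf, _ => exact ⟨μ, hμ, f, by simpa using hf⟩
    | m + 2, hf, hmin =>
      exfalso
      have h1 := hmin (m + 1) (by omega)
      push Not at h1
      obtain ⟨i, hi⟩ := lower m (μ f) (h1 μ hμ f) hf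
      have h2 := h1 ⁅τ i, μ⁆ (lie_mem_right k _ J _ _ hμ) f
      rw [Derivation.commutator_apply] at h2
      apply hi
      simpa using add_mem h2 (h1 μ hμ (τ i f))
  obtain ⟨μ, hμ, f, hf⟩ := step1
  intro g hg hg2
  by_contra! hall
  obtain ⟨i, hi⟩ := lower 0 g (by simpa using hg) (by simpa using hg2)
  simp only [zero_add, pow_one] at hi
  have key : ∀ a : A, ⁅a • τ i, μ⁆ g ∈ P := fun a => hall _ (lie_mem_right k _ J _ _ hμ)
  have h1 := key f
  have h2 := Ideal.mul_mem_left P f (key 1)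
  simp only [Derivation.commutator_apply, Derivation.smul_apply, smul_eq_mul, one_mul,
    Derivation.leibniz] at h1 h2
  have h3 : μ f * τ i g ∈ P := by
    convert sub_mem h2 h1 using 1
    ring
  exact (hPp.mem_or_mem h3).elim hf hi
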